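/- The three rate regions coincide: R̂_0 = R_2 (and hence, combined with Proposition 1, R_0 = R_2), i.e., policies that base decisions only on whether the PU queue is empty or busy and always give priority to PU traffic achieve exactly the same set of SU rate vectors as policies allowed to violate the PU priority constraint. -/

import Mathlib

open Finset

/-- Linearized rate region `R̂_0`. -/
def linRegion {S : Type*} [Fintype S] (I : S → ℕ)
    (P rs rp : (s : S) → Fin (I s + 1) → ℝ)
    (Phat : S → ℝ) (lam : ℝ) : Set (S → ℝ) :=
  {rbar | ∃ qB qE : (s : S) → Fin (I s + 1) → ℝ,
    (∀ s i, 0 ≤ qB s i) ∧ (∀ s i, 0 ≤ qE s i) ∧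
    (∑ s, ∑ i, rp s i * qB s i) = lam ∧
    (∀ s, (∑ i, P s i * qE s i) + (∑ i, P s i * qB s i) ≤ Phat s) ∧
    ((∑ s, ∑ i, qE s i) + (∑ s, ∑ i, qB s i)) = 1 ∧
    (∀ s, rbar s = ∑ i, rs s i * qE s i)}

/-- Unconstrained-priority rate region `R_2`. -/
def priorityFreeRegion {S : Type*} [Fintype S] (I : S → ℕ)
    (P rs rp : (s : S) → Fin (I s + 1) → ℝ)
    (Phat : S → ℝ) (lam : ℝ) : Set (S → ℝ) :=
  {rbar | ∃ p0 p1 : (s : S) → Fin (I s + 1) → ℝ,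
    (∀ s i, 0 ≤ p0 s i) ∧ (∀ s i, 0 ≤ p1 s i) ∧
    ((∑ s, ∑ i, p0 s i) + (∑ s, ∑ i, p1 s i)) = 1 ∧
    lam ≤ (∑ s, ∑ i, rp s i * p1 s i) ∧
    (∀ s, (∑ i, P s i * p0 s i) + (∑ i, P s i * p1 s i) ≤ Phat s) ∧
    (∀ s, rbar s = ∑ i, rs s i * p0 s i)}

/-!
`R̂_0 ⊆ R_2` by taking `p(0, ·) = q(e, ·)` and `p(1, ·) = q(b, ·)`. Conversely, a priority-free
policy serves the PU at some rate `μ ≥ λ_p`. Keep only the fraction `θ = λ_p / μ` of its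
PU-serving mass `p(1, ·)`, so that the service rate becomes exactly `λ_p`, and add the remaining
fraction `1 - θ` to the empty-queue mass with each SU idle. Staying idle earns no SU rate and costs
the least power.
-/

section Concentrate

variable {ι R : Type*} [Fintype ι] [DecidableEq ι]

/-- The weight on `ι` that carries the whole mass of `p` at the single point `i`. With `i` the idle
power level, it replaces every transmission of a secondary user by silence. -/
def concentrateAt [AddCommMonoid R] (i : ι) (p : ι → R) : ι → R :=
  Pi.single i (∑ j, p j)

theorem concentrateAt_nonneg [AddCommMonoid R] [PartialOrder R] [IsOrderedAddMonoid R]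
    (i : ι) {p : ι → R} (hp : ∀ j, 0 ≤ p j) : 0 ≤ concentrateAt i p :=
  Pi.single_nonneg.2 (sum_nonneg fun j _ => hp j)

theorem sum_concentrateAt [AddCommMonoid R] (i : ι) (p : ι → R) :
    ∑ j, concentrateAt i p j = ∑ j, p j := by
  simp [concentrateAt]

theorem sum_mul_concentrateAt [NonUnitalNonAssocSemiring R] (i : ι) (f p : ι → R) :
    ∑ j, f j * concentrateAt i p j = f i * ∑ j, p j :=
  dotProduct_single f (∑ j, p j) i

theorem sum_mul_concentrateAt_le [Semiring R] [PartialOrder R] [IsOrderedRing R]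
    {i : ι} {f p : ι → R} (hf : ∀ j, f i ≤ f j) (hp : ∀ j, 0 ≤ p j) :
    ∑ j, f j * concentrateAt i p j ≤ ∑ j, f j * p j := by
  rw [sum_mul_concentrateAt, mul_sum]
  exact sum_le_sum fun j _ => mul_le_mul_of_nonneg_right (hf j) (hp j)

end Concentrate

theorem exists_mem_Icc_mul_eq {K : Type*} [Field K] [LinearOrder K] [IsStrictOrderedRing K]
    {a b : K} (ha : 0 ≤ a) (hab : a ≤ b) : ∃ θ ∈ Set.Icc (0 : K) 1, θ * b = a :=
  have hb : 0 ≤ b := ha.trans hab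
  -- If `b = 0` then `a = 0` too, so the witness is still correct with the junk value `0 / 0 = 0`.
  ⟨a / b, ⟨div_nonneg ha hb, div_le_one_of_le₀ hab hb⟩,
    div_mul_cancel_of_imp fun h => le_antisymm (hab.trans_eq h) ha⟩

section RateRegions

variable {S : Type*} [Fintype S] (I : S → ℕ) (P rs rp : (s : S) → Fin (I s + 1) → ℝ)
  (Phat : S → ℝ) (lam : ℝ)

theorem linRegion_subset_priorityFreeRegion :
    linRegion I P rs rp Phat lam ⊆ priorityFreeRegion I P rs rp Phat lam := by
  rintro rbar ⟨qB, qE, hqB, hqE, hservice, hpower, hmass, hrate⟩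
  exact ⟨qE, qB, hqE, hqB, hmass, hservice.ge, hpower, hrate⟩

variable {I P rs lam}

theorem priorityFreeRegion_subset_linRegion (hP : ∀ s i, P s 0 ≤ P s i)
    (hrs0 : ∀ s, rs s 0 = 0) (hlam : 0 ≤ lam) :
    priorityFreeRegion I P rs rp Phat lam ⊆ linRegion I P rs rp Phat lam := by
  rintro rbar ⟨p0, p1, hp0, hp1, hmass, hservice, hpower, hrate⟩
  obtain ⟨θ, ⟨hθ0, hθ1⟩, hθ⟩ := exists_mem_Icc_mul_eq hlam hservice
  have hθ1' : 0 ≤ 1 - θ := sub_nonneg.2 hθ1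
  let idle s := concentrateAt 0 (p1 s)
  have busy_sum (f : (s : S) → Fin (I s + 1) → ℝ) (s : S) :
      ∑ i, f s i * (θ * p1 s i) = θ * ∑ i, f s i * p1 s i := by
    simp only [mul_left_comm, mul_sum]
  have empty_sum (f : (s : S) → Fin (I s + 1) → ℝ) (s : S) :
      ∑ i, f s i * (p0 s i + (1 - θ) * idle s i)
        = ∑ i, f s i * p0 s i + (1 - θ) * ∑ i, f s i * idle s i := by
    simp only [mul_add, mul_left_comm, sum_add_distrib, mul_sum]
  refine ⟨fun s i => θ * p1 s i, fun s i => p0 s i + (1 - θ) * idle s i,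
    fun s i => mul_nonneg hθ0 (hp1 s i),
    fun s i => add_nonneg (hp0 s i) (mul_nonneg hθ1' (concentrateAt_nonneg 0 (hp1 s) i)),
    ?service, fun s => ?power, ?mass, fun s => ?rate⟩
  case service => simp only [busy_sum, ← mul_sum, hθ]
  case power =>
    have idle_le : ∑ i, P s i * idle s i ≤ ∑ i, P s i * p1 s i :=
      sum_mul_concentrateAt_le (hP s) (hp1 s)
    rw [busy_sum, empty_sum]
    linarith [hpower s, mul_le_mul_of_nonneg_left idle_le hθ1']
  case mass =>
    simp only [sum_add_distrib, ← mul_sum, idle, sum_concentrateAt]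
    linarith
  case rate =>
    have idle_rate : ∑ i, rs s i * idle s i = 0 := by
      rw [sum_mul_concentrateAt, hrs0, zero_mul]
    rw [empty_sum, idle_rate, mul_zero, add_zero, hrate]

theorem lin_region_eq_priorityFree_general (hP : ∀ s i, P s 0 ≤ P s i)
    (hrs0 : ∀ s, rs s 0 = 0) (hlam : 0 ≤ lam) :
    linRegion I P rs rp Phat lam = priorityFreeRegion I P rs rp Phat lam :=
  (linRegion_subset_priorityFreeRegion I P rs rp Phat lam).antisymm
    (priorityFreeRegion_subset_linRegion rp Phat hP hrs0 hlam)

end RateRegions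

/-- The rate regions coincide: `R̂_0 = R_2`. Policies basing decisions only on
whether the PU queue is empty or busy and always giving priority to PU traffic
achieve exactly the same set of SU rate vectors as policies allowed to violate
the PU priority constraint. -/
theorem lin_region_eq_priorityFree
    {S : Type*} [Fintype S] [Nonempty S]
    (I : S → ℕ) (hI : ∀ s, 1 ≤ I s)
    (P rs rp : (s : S) → Fin (I s + 1) → ℝ) (rp0 : ℝ)
    (Phat : S → ℝ) (lam : ℝ)
    (hP0 : ∀ s, P s 0 = 0) (hPnn : ∀ s i, 0 ≤ P s i)
    (hrs0 : ∀ s, rs s 0 = 0) (hrs : ∀ s i, rs s i ∈ Set.Icc (0:ℝ) 1)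
    (hrp : ∀ s i, rp s i ∈ Set.Icc (0:ℝ) 1) (hrp00 : ∀ s, rp s 0 = rp0)
    (hrp0 : rp0 ∈ Set.Icc (0:ℝ) 1)
    (hPhat : ∀ s, 0 ≤ Phat s) (hlam : 0 ≤ lam) :
    linRegion I P rs rp Phat lam = priorityFreeRegion I P rs rp Phat lam := by
  have hP : ∀ s i, P s 0 ≤ P s i := fun s i => (hP0 s).trans_le (hPnn s i)
  exact lin_region_eq_priorityFree_general rp Phat hP hrs0 hlam
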